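/- For every inverse temperature β ∈ (0,∞) and every range exponent α > 3, there exist constants c_β > 0 and C_β < ∞ (depending only on β and α) such that for every integer N ≥ 1, the variance of the height at the origin under the discrete Gaussian long-range chain satisfies c_β N ≤ Var_{N,β,α}[φ(0)] ≤ C_β N. -/

import Mathlib

noncomputable section

/-- Configurations of the long-range chain of length `N`: integer-valued height functions
on `ℤ` vanishing outside `{-N, …, N}`. -/
def ChainConfig (N : ℕ) : Type :=
  {φ : ℤ → ℤ // ∀ k : ℤ, (N : ℤ) < |k| → φ k = 0}

/-- Energy `β ∑_{i ≠ j} |φ(i) − φ(j)|^q / |i − j|^α` of a configuration of the long-range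
chain with potential exponent `q` and range exponent `α`. -/
def chainEnergy (β α q : ℝ) (φ : ℤ → ℤ) : ℝ :=
  β * ∑' p : ℤ × ℤ,
      if p.1 = p.2 then 0
      else |((φ p.1 - φ p.2 : ℤ) : ℝ)| ^ q / |((p.1 - p.2 : ℤ) : ℝ)| ^ α

/-- Boltzmann weight of a configuration. -/
def chainWeight (β α q : ℝ) (φ : ℤ → ℤ) : ℝ :=
  Real.exp (-chainEnergy β α q φ)

/-- Partition function of the long-range chain. -/
def chainZ (N : ℕ) (β α q : ℝ) : ℝ :=
  ∑' φ : ChainConfig N, chainWeight β α q φ.val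

/-- Mean of the height at the origin. -/
def chainMean (N : ℕ) (β α q : ℝ) : ℝ :=
  (∑' φ : ChainConfig N, ((φ.val 0 : ℤ) : ℝ) * chainWeight β α q φ.val) / chainZ N β α q

/-- Variance of the height at the origin under the long-range chain `μ_{N,β,α}`
(with potential exponent `q`; `q = 2` is the discrete Gaussian chain,
`q ∈ (0,2)` the `q`-SOS chain). -/
def chainVar (N : ℕ) (β α q : ℝ) : ℝ :=
  (∑' φ : ChainConfig N, ((φ.val 0 : ℤ) : ℝ) ^ 2 * chainWeight β α q φ.val) / chainZ N β α q
    - chainMean N β α q ^ 2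

end

/-!
Discrete Gaussian measures on a lattice obey a monotonicity principle: if the quadratic form `B`
dominates `A`, then every linear functional has a smaller variance under `exp (-B)` than under
`exp (-A)`. After duplicating the system and rotating `(x, y) ↦ (x + y, x - y)`, the difference of
the variances becomes the sum of a rank-one kernel against `sinh ((B - A) (a, b) / 2)`, restricted
to pairs `a ≡ b` modulo twice the lattice, and this kernel is positive semidefinite by the Schur
product theorem.

The chain is compared in this way with two nearest-neighbour Gaussians on the spanning tree of `ℤ`
in which the non-positive half-line is a path and each `k > 0` is a leaf attached at `-k`. The
increments along the tree edges are free integer coordinates of the box, hence independent under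
the tree Gaussians, and the height at the origin is the sum of the `N + 1` increments on the path,
so its variance is exactly linear in `N + 1`. Dropping all other edges bounds the chain energy from
below by a tree energy. Conversely, since `α > 3`, the second moment `∑ n ^ 2 * J n` of the coupling
is finite, and by Cauchy-Schwarz the chain energy is at most a constant times the nearest-neighbour
energy of `ℤ`, which in turn is at most a constant times the tree energy.
-/

noncomputable section

open Filter Topology

section PosSemidef

variable {X V : Type*} [AddCommGroup V] [Module ℝ V] {M : Matrix X X ℝ}

lemma posSemidef_map_pow_succ (hM : M.PosSemidef) (n : ℕ) :
    (M.map (· ^ (n + 1))).PosSemidef := by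
  induction n with
  | zero => simpa using hM
  | succ n ih =>
    have hadamard_eq : M.map (· ^ (n + 1 + 1)) = (M.map (· ^ (n + 1))).hadamard M := by
      ext a b
      simp [pow_succ]
    exact hadamard_eq ▸ ih.hadamard hM

lemma posSemidef_map_sinh (hM : M.PosSemidef) : (M.map Real.sinh).PosSemidef := by
  refine ⟨hM.1.map Real.sinh fun _ ↦ rfl, fun x ↦ ?_⟩
  have taylor : HasSum
      (fun n : ℕ ↦ ∑ a ∈ x.support, ∑ b ∈ x.support,
        star (x a) * (M a b ^ (2 * n + 1) / ((2 * n + 1).factorial : ℝ)) * x b)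
      (∑ a ∈ x.support, ∑ b ∈ x.support, star (x a) * Real.sinh (M a b) * x b) :=
    hasSum_sum fun a _ ↦ hasSum_sum fun b _ ↦
      ((Real.hasSum_sinh (M a b)).mul_left _).mul_right _
  refine taylor.nonneg fun n ↦ ?_
  have power := (posSemidef_map_pow_succ hM (2 * n)).2 x
  calc (0 : ℝ) ≤ (∑ a ∈ x.support, ∑ b ∈ x.support, star (x a) * M a b ^ (2 * n + 1) * x b)
        / ((2 * n + 1).factorial : ℝ) := div_nonneg power (Nat.cast_nonneg _)
    _ = _ := by
      simp only [Finset.sum_div]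
      exact Finset.sum_congr rfl fun a _ ↦ Finset.sum_congr rfl fun b _ ↦ by ring

lemma posSemidef_of_isPosSemidef {R : LinearMap.BilinForm ℝ V} (hR : R.IsPosSemidef)
    (v : X → V) : (Matrix.of fun a b ↦ R (v a) (v b)).PosSemidef := by
  refine ⟨?_, fun x ↦ ?_⟩
  · ext a b
    exact hR.isSymm.eq (v b) (v a)
  · refine (hR.isNonneg.nonneg (x.sum fun a xa ↦ xa • v a)).trans_eq ?_
    simp only [Finsupp.sum, map_sum, LinearMap.sum_apply, map_smul, LinearMap.smul_apply,
      smul_eq_mul, Matrix.of_apply, star_trivial, Finset.mul_sum]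
    rw [Finset.sum_comm]
    exact Finset.sum_congr rfl fun a _ ↦ Finset.sum_congr rfl fun b _ ↦ by ring

lemma sum_sum_nonneg_of_posSemidef (hM : M.PosSemidef) (F : Finset X) (c : X → ℝ) :
    0 ≤ ∑ a ∈ F, ∑ b ∈ F, c a * M a b * c b := by
  classical
  have nonneg := hM.2 (Finsupp.indicator F fun a _ ↦ c a)
  have support := Finsupp.support_indicator_subset F fun a _ ↦ c a
  rw [Finsupp.sum_of_support_subset _ support _ (by simp)] at nonneg
  refine nonneg.trans_eq (Finset.sum_congr rfl fun a ha ↦ ?_)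
  rw [Finsupp.sum_of_support_subset _ support _ (by simp)]
  exact Finset.sum_congr rfl fun b hb ↦ by simp [ha, hb]

lemma nonneg_of_hasSum_posSemidef (hM : M.PosSemidef) (c : X → ℝ) {s : ℝ}
    (hs : HasSum (fun p : X × X ↦ c p.1 * M p.1 p.2 * c p.2) s) : 0 ≤ s := by
  have diag : Tendsto (fun F : Finset X ↦ (F, F)) atTop atTop := by
    rw [← prod_atTop_atTop_eq]
    exact tendsto_diag
  have sums : Tendsto (fun F : Finset (X × X) ↦ ∑ p ∈ F, c p.1 * M p.1 p.2 * c p.2)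
      atTop (𝓝 s) := by
    simpa only [HasSum, SummationFilter.unconditional_filter] using hs
  refine ge_of_tendsto' (sums.comp (tendsto_finsetProd_atTop.comp diag)) fun F ↦ ?_
  simpa only [Function.comp_apply, Finset.sum_product] using sum_sum_nonneg_of_posSemidef hM F c

end PosSemidef

section GibbsAverage

variable {X Y : Type*}

/-- The expectation of `f` under the Gibbs measure on the discrete space `X` with energy `E`.
It is meaningful only when both series converge. -/
def gibbsAverage (E f : X → ℝ) : ℝ :=
  (∑' x, f x * Real.exp (-E x)) / ∑' x, Real.exp (-E x)

lemma gibbsAverage_comp_equiv (e : X ≃ Y) (E f : Y → ℝ) :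
    gibbsAverage (E ∘ e) (f ∘ e) = gibbsAverage E f := by
  unfold gibbsAverage
  rw [← e.tsum_eq fun y ↦ f y * Real.exp (-E y), ← e.tsum_eq fun y ↦ Real.exp (-E y)]
  rfl

lemma gibbsAverage_eq_zero_of_odd [AddGroup X] {E f : X → ℝ} (hE : ∀ x, E (-x) = E x)
    (hf : ∀ x, f (-x) = -f x) : gibbsAverage E f = 0 := by
  have reflect := (Equiv.neg X).tsum_eq fun x ↦ f x * Real.exp (-E x)
  simp only [Equiv.neg_apply, hE, hf, neg_mul, tsum_neg] at reflect
  rw [gibbsAverage, self_eq_neg.1 reflect.symm, zero_div]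

lemma tsum_exp_neg_pos [Nonempty X] {E : X → ℝ} (hE : Summable fun x ↦ Real.exp (-E x)) :
    0 < ∑' x, Real.exp (-E x) :=
  hE.tsum_pos (fun _ ↦ (Real.exp_pos _).le) (Classical.arbitrary X) (Real.exp_pos _)

lemma summable_mul_exp_neg_of_le {E E' f : X → ℝ} (hE : ∀ x, E x ≤ E' x) (hf : ∀ x, 0 ≤ f x)
    (hsum : Summable fun x ↦ f x * Real.exp (-E x)) :
    Summable fun x ↦ f x * Real.exp (-E' x) :=
  hsum.of_nonneg_of_le (fun x ↦ mul_nonneg (hf x) (Real.exp_pos _).le) fun x ↦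
    mul_le_mul_of_nonneg_left (Real.exp_le_exp.2 (neg_le_neg (hE x))) (hf x)

lemma summable_exp_neg_of_le {E E' : X → ℝ} (hE : ∀ x, E x ≤ E' x)
    (hsum : Summable fun x ↦ Real.exp (-E x)) : Summable fun x ↦ Real.exp (-E' x) := by
  simpa using summable_mul_exp_neg_of_le (f := fun _ ↦ 1) hE (fun _ ↦ zero_le_one)
    (by simpa using hsum)

lemma hasSum_mul_prod {f : X → ℝ} {g : Y → ℝ} {s t : ℝ} (hf : HasSum f s) (hg : HasSum g t) :
    HasSum (fun p : X × Y ↦ f p.1 * g p.2) (s * t) :=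
  hf.mul hg (summable_mul_of_summable_norm hf.summable.norm hg.summable.norm)

lemma hasSum_sub_mul_sub {f g h : X → ℝ} (hg : Summable g) (hh : Summable h)
    (hfg : Summable fun x ↦ f x * g x) (hfh : Summable fun x ↦ f x * h x) :
    HasSum (fun p : X × X ↦ (f p.1 - f p.2) * (g p.1 * h p.2 - h p.1 * g p.2))
      (2 * ((∑' x, f x * g x) * ∑' x, h x - (∑' x, f x * h x) * ∑' x, g x)) := by
  have expanded :=
    ((hasSum_mul_prod hfg.hasSum hh.hasSum).sub (hasSum_mul_prod hfh.hasSum hg.hasSum)).sub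
      ((hasSum_mul_prod hg.hasSum hfh.hasSum).sub (hasSum_mul_prod hh.hasSum hfg.hasSum))
  have hval : 2 * ((∑' x, f x * g x) * ∑' x, h x - (∑' x, f x * h x) * ∑' x, g x) =
      (∑' x, f x * g x) * ∑' x, h x - (∑' x, f x * h x) * ∑' x, g x -
        ((∑' x, g x) * ∑' x, f x * h x - (∑' x, h x) * ∑' x, f x * g x) := by ring
  rw [hval]
  exact expanded.congr_fun fun p ↦ by ring

end GibbsAverage

section LatticeGaussian

variable {L V : Type*} [AddCommGroup L] [AddCommGroup V] [Module ℝ V]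

/-- The map `(x, y) ↦ (x + y, x - y)`, the integral version of a rotation by 45 degrees. -/
def sumDiff (p : L × L) : L × L := (p.1 + p.2, p.1 - p.2)

lemma sumDiff_injective [IsAddTorsionFree L] : Function.Injective (sumDiff (L := L)) := by
  rintro ⟨x, y⟩ ⟨x', y'⟩ h
  obtain ⟨hadd, hsub⟩ := Prod.mk.inj h
  simp only at hadd hsub
  have hx : x = x' := nsmul_right_injective two_ne_zero <| by
    calc 2 • x = (x + y) + (x - y) := by abel
      _ = (x' + y') + (x' - y') := by rw [hadd, hsub]
      _ = 2 • x' := by abel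
  subst hx
  exact Prod.ext rfl (add_left_cancel hadd)

open scoped Classical in
/-- The kernel on `L` that is the indicator of congruence modulo `2 L`. -/
def congrModTwo (L : Type*) [AddCommGroup L] : Matrix L L ℝ :=
  let mod : L → L ⧸ (nsmulAddMonoidHom (α := L) 2).range := QuotientAddGroup.mk
  (1 : Matrix _ _ ℝ).submatrix mod mod

lemma posSemidef_congrModTwo : (congrModTwo L).PosSemidef := by
  classical exact Matrix.PosSemidef.one.submatrix _

lemma congrModTwo_sumDiff (p : L × L) : congrModTwo L (sumDiff p).1 (sumDiff p).2 = 1 := by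
  classical
  refine (Matrix.one_apply (α := ℝ)).trans (if_pos ?_)
  exact QuotientAddGroup.eq.2 ⟨-p.2, by
    simp only [nsmulAddMonoidHom_apply, sumDiff]
    abel⟩

lemma congrModTwo_eq_zero {p : L × L} (hp : p ∉ Set.range sumDiff) :
    congrModTwo L p.1 p.2 = 0 := by
  classical
  refine (Matrix.one_apply (α := ℝ)).trans (if_neg fun hmod ↦ hp ?_)
  obtain ⟨c, hc⟩ := QuotientAddGroup.eq.1 hmod
  rw [nsmulAddMonoidHom_apply] at hc
  refine ⟨(p.1 + c, -c), Prod.ext ?_ ?_⟩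
  · simp [sumDiff]
  · rw [← sub_eq_zero]
    calc p.1 + c - -c - p.2 = 2 • c - (-p.1 + p.2) := by abel
      _ = 0 := sub_eq_zero.2 hc

lemma exp_mul_exp_sub_eq_sinh {A B : LinearMap.BilinForm ℝ V} (hA : A.IsSymm) (hB : B.IsSymm)
    (x y : V) :
    Real.exp (-A x x) * Real.exp (-B y y) - Real.exp (-B x x) * Real.exp (-A y y) =
      2 * (Real.exp (-(A + B) (x + y) (x + y) / 4) * Real.exp (-(A + B) (x - y) (x - y) / 4) *
        Real.sinh (((1 / 2 : ℝ) • (B - A)) (x + y) (x - y))) := by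
  have exponent_A : -A x x + -B y y = -(A + B) (x + y) (x + y) / 4 +
      -(A + B) (x - y) (x - y) / 4 + ((1 / 2 : ℝ) • (B - A)) (x + y) (x - y) := by
    simp only [map_add, map_sub, LinearMap.add_apply, LinearMap.sub_apply, LinearMap.smul_apply,
      smul_eq_mul, hA.eq y x, hB.eq y x]
    ring
  have exponent_B : -B x x + -A y y = -(A + B) (x + y) (x + y) / 4 +
      -(A + B) (x - y) (x - y) / 4 + -((1 / 2 : ℝ) • (B - A)) (x + y) (x - y) := by
    simp only [map_add, map_sub, LinearMap.add_apply, LinearMap.sub_apply, LinearMap.smul_apply,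
      smul_eq_mul, hA.eq y x, hB.eq y x]
    ring
  rw [← Real.exp_add, ← Real.exp_add, exponent_A, exponent_B, Real.sinh_eq]
  simp only [Real.exp_add]
  ring

variable {A B : LinearMap.BilinForm ℝ V} (ι : L →+ V) (u : L →+ ℝ)

lemma tsum_sq_mul_tsum_le [IsAddTorsionFree L] (hA : A.IsSymm) (hAB : (B - A).IsPosSemidef)
    (hZ : Summable fun x ↦ Real.exp (-A (ι x) (ι x)))
    (hu : Summable fun x ↦ u x ^ 2 * Real.exp (-A (ι x) (ι x))) :
    (∑' x, u x ^ 2 * Real.exp (-B (ι x) (ι x))) * ∑' x, Real.exp (-A (ι x) (ι x)) ≤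
      (∑' x, u x ^ 2 * Real.exp (-A (ι x) (ι x))) * ∑' x, Real.exp (-B (ι x) (ι x)) := by
  have hB : B.IsSymm := sub_add_cancel B A ▸ hAB.isSymm.add hA
  have hle (x : L) : A (ι x) (ι x) ≤ B (ι x) (ι x) := sub_nonneg.1 (hAB.isNonneg.nonneg (ι x))
  have hZ' := summable_exp_neg_of_le hle hZ
  have hu' := summable_mul_exp_neg_of_le hle (fun x ↦ sq_nonneg (u x)) hu
  let K : Matrix L L ℝ := (congrModTwo L).hadamard
    ((Matrix.of fun a b ↦ ((1 / 2 : ℝ) • (B - A)) (ι a) (ι b)).map Real.sinh)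
  have hK : K.PosSemidef := posSemidef_congrModTwo.hadamard <| posSemidef_map_sinh <|
    posSemidef_of_isPosSemidef (hAB.smul (by norm_num)) ι
  let c (a : L) : ℝ := u a * Real.exp (-(A + B) (ι a) (ι a) / 4)
  have hrotate (p : L × L) : 2 * (c (sumDiff p).1 * K (sumDiff p).1 (sumDiff p).2 *
      c (sumDiff p).2) = (u p.1 ^ 2 - u p.2 ^ 2) *
        (Real.exp (-A (ι p.1) (ι p.1)) * Real.exp (-B (ι p.2) (ι p.2)) -
          Real.exp (-B (ι p.1) (ι p.1)) * Real.exp (-A (ι p.2) (ι p.2))) := by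
    rw [exp_mul_exp_sub_eq_sinh hA hB]
    simp only [c, K, Matrix.hadamard_apply, congrModTwo_sumDiff, one_mul, Matrix.map_apply,
      Matrix.of_apply]
    simp only [sumDiff, map_add, map_sub]
    ring
  have hsum := (hasSum_sub_mul_sub (f := fun x ↦ u x ^ 2) hZ hZ' hu hu').div_const 2
  simp only [← hrotate, mul_div_cancel_left₀ _ (two_ne_zero' ℝ)] at hsum
  have hker : HasSum (fun p : L × L ↦ c p.1 * K p.1 p.2 * c p.2) _ :=
    (sumDiff_injective.hasSum_iff fun p hp ↦ by simp [K, congrModTwo_eq_zero hp]).1 hsum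
  exact sub_nonneg.1 (nonneg_of_hasSum_posSemidef hK c hker)

theorem gibbsAverage_sq_anti [IsAddTorsionFree L] (hA : A.IsSymm) (hAB : (B - A).IsPosSemidef)
    (hZ : Summable fun x ↦ Real.exp (-A (ι x) (ι x)))
    (hu : Summable fun x ↦ u x ^ 2 * Real.exp (-A (ι x) (ι x))) :
    gibbsAverage (fun x ↦ B (ι x) (ι x)) (fun x ↦ u x ^ 2) ≤
      gibbsAverage (fun x ↦ A (ι x) (ι x)) (fun x ↦ u x ^ 2) := by
  have hle (x : L) : A (ι x) (ι x) ≤ B (ι x) (ι x) := sub_nonneg.1 (hAB.isNonneg.nonneg (ι x))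
  have hZ' := summable_exp_neg_of_le hle hZ
  exact (div_le_div_iff₀ (tsum_exp_neg_pos hZ') (tsum_exp_neg_pos hZ)).2
    (tsum_sq_mul_tsum_le ι u hA hAB hZ hu)

end LatticeGaussian

section ProductGibbs

variable {ι X : Type*}

lemma hasSum_fin_prod {n : ℕ} {f : Fin n → X → ℝ} (hf : ∀ i, Summable (f i)) :
    HasSum (fun x : Fin n → X ↦ ∏ i, f i (x i)) (∏ i, ∑' a, f i a) := by
  induction n with
  | zero => simp
  | succ n ih =>
    have tail := ih (f := fun i ↦ f i.succ) fun i ↦ hf i.succ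
    rw [← (Fin.consEquiv fun _ ↦ X).hasSum_iff, Fin.prod_univ_succ]
    refine (hasSum_mul_prod (hf 0).hasSum tail).congr_fun fun p ↦ ?_
    simp [Fin.prod_univ_succ, Fin.consEquiv]

lemma hasSum_pi_prod [Fintype ι] {f : ι → X → ℝ} (hf : ∀ i, Summable (f i)) :
    HasSum (fun x : ι → X ↦ ∏ i, f i (x i)) (∏ i, ∑' a, f i a) := by
  let e := Fintype.equivFin ι
  have hfin := (e.arrowCongr (Equiv.refl X)).hasSum_iff.2
    (hasSum_fin_prod (f := fun i ↦ f (e.symm i)) fun i ↦ hf (e.symm i))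
  rw [e.symm.prod_comp fun i ↦ ∑' a, f i a] at hfin
  refine hfin.congr_fun fun x ↦ ?_
  simpa using (e.symm.prod_comp fun i ↦ f i (x i)).symm

lemma gibbsAverage_one [Nonempty X] {E : X → ℝ} (hE : Summable fun x ↦ Real.exp (-E x)) :
    gibbsAverage E (fun _ ↦ 1) = 1 := by
  simp only [gibbsAverage, one_mul, div_self (tsum_exp_neg_pos hE).ne']

lemma gibbsAverage_sum {κ : Type*} (s : Finset κ) {E : X → ℝ} {f : κ → X → ℝ}
    (hf : ∀ k ∈ s, Summable fun x ↦ f k x * Real.exp (-E x)) :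
    gibbsAverage E (fun x ↦ ∑ k ∈ s, f k x) = ∑ k ∈ s, gibbsAverage E (f k) := by
  simp only [gibbsAverage, Finset.sum_mul, Summable.tsum_finsetSum hf, Finset.sum_div]

variable {E f : ι → X → ℝ}

/-- The factors of the product observable `x ↦ f i (x i) * f j (x j)`. -/
def pairFactor [DecidableEq ι] (f : ι → X → ℝ) (i j k : ι) (a : X) : ℝ :=
  (if k = i then f k a else 1) * (if k = j then f k a else 1)

lemma summable_pairFactor_mul_exp_neg [DecidableEq ι]
    (hE : ∀ i, Summable fun a ↦ Real.exp (-E i a))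
    (hf : ∀ i, Summable fun a ↦ f i a * Real.exp (-E i a))
    (hf2 : ∀ i, Summable fun a ↦ f i a ^ 2 * Real.exp (-E i a)) (i j k : ι) :
    Summable fun a ↦ pairFactor f i j k a * Real.exp (-E k a) := by
  unfold pairFactor
  split_ifs
  · simpa only [sq] using hf2 k
  · simpa only [mul_one] using hf k
  · simpa only [one_mul] using hf k
  · simpa only [one_mul] using hE k

variable [Fintype ι]

lemma exp_neg_sum_eq_prod (x : ι → X) :
    Real.exp (-∑ i, E i (x i)) = ∏ i, Real.exp (-E i (x i)) := by
  rw [← Finset.sum_neg_distrib, Real.exp_sum]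

lemma summable_pi_exp_neg_sum (hE : ∀ i, Summable fun a ↦ Real.exp (-E i a)) :
    Summable fun x : ι → X ↦ Real.exp (-∑ i, E i (x i)) := by
  simpa only [exp_neg_sum_eq_prod] using (hasSum_pi_prod hE).summable

lemma summable_pi_prod_mul_exp_neg_sum (hf : ∀ i, Summable fun a ↦ f i a * Real.exp (-E i a)) :
    Summable fun x : ι → X ↦ (∏ i, f i (x i)) * Real.exp (-∑ i, E i (x i)) := by
  simpa only [exp_neg_sum_eq_prod, Finset.prod_mul_distrib] using (hasSum_pi_prod hf).summable

lemma gibbsAverage_pi_prod (hE : ∀ i, Summable fun a ↦ Real.exp (-E i a))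
    (hf : ∀ i, Summable fun a ↦ f i a * Real.exp (-E i a)) :
    gibbsAverage (fun x : ι → X ↦ ∑ i, E i (x i)) (fun x ↦ ∏ i, f i (x i)) =
      ∏ i, gibbsAverage (E i) (f i) := by
  simp only [gibbsAverage, exp_neg_sum_eq_prod, ← Finset.prod_mul_distrib,
    (hasSum_pi_prod hE).tsum_eq, (hasSum_pi_prod hf).tsum_eq, Finset.prod_div_distrib]

lemma prod_pairFactor [DecidableEq ι] (i j : ι) (x : ι → X) :
    ∏ k, pairFactor f i j k (x k) = f i (x i) * f j (x j) := by
  simp only [pairFactor, Finset.prod_mul_distrib, Finset.prod_ite_eq', Finset.mem_univ, if_true]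

lemma prod_gibbsAverage_pairFactor [DecidableEq ι] [Nonempty X]
    (hE : ∀ i, Summable fun a ↦ Real.exp (-E i a)) (hf : ∀ i, gibbsAverage (E i) (f i) = 0)
    (i j : ι) :
    ∏ k, gibbsAverage (E k) (pairFactor f i j k) =
      if i = j then gibbsAverage (E i) (fun a ↦ f i a ^ 2) else 0 := by
  split_ifs with hij
  · subst hij
    refine (Finset.prod_eq_single i (fun k _ hk ↦ ?_) (by simp)).trans ?_
    · have hfactor : pairFactor f i i k = fun _ ↦ 1 := funext fun a ↦ by simp [pairFactor, hk]
      rw [hfactor, gibbsAverage_one (hE k)]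
    · congr 1
      exact funext fun a ↦ by simp [pairFactor, sq]
  · have hfactor : pairFactor f i j i = f i := funext fun a ↦ by simp [pairFactor, hij]
    exact Finset.prod_eq_zero (Finset.mem_univ i) (hfactor ▸ hf i)

lemma sum_sq_eq_sum_sum_prod_pairFactor [DecidableEq ι] (s : Finset ι) (x : ι → X) :
    (∑ i ∈ s, f i (x i)) ^ 2 = ∑ i ∈ s, ∑ j ∈ s, ∏ k, pairFactor f i j k (x k) := by
  simp only [prod_pairFactor, sq, Finset.sum_mul_sum]

lemma summable_pi_sum_sq_mul_exp_neg_sum (hE : ∀ i, Summable fun a ↦ Real.exp (-E i a))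
    (hf : ∀ i, Summable fun a ↦ f i a * Real.exp (-E i a))
    (hf2 : ∀ i, Summable fun a ↦ f i a ^ 2 * Real.exp (-E i a)) (s : Finset ι) :
    Summable fun x : ι → X ↦ (∑ i ∈ s, f i (x i)) ^ 2 * Real.exp (-∑ i, E i (x i)) := by
  classical
  simp only [sum_sq_eq_sum_sum_prod_pairFactor, Finset.sum_mul]
  exact summable_sum fun i _ ↦ summable_sum fun j _ ↦
    summable_pi_prod_mul_exp_neg_sum (summable_pairFactor_mul_exp_neg hE hf hf2 i j)

theorem gibbsAverage_pi_sum_sq [Nonempty X] (hE : ∀ i, Summable fun a ↦ Real.exp (-E i a))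
    (hf : ∀ i, Summable fun a ↦ f i a * Real.exp (-E i a))
    (hf2 : ∀ i, Summable fun a ↦ f i a ^ 2 * Real.exp (-E i a))
    (hmean : ∀ i, gibbsAverage (E i) (f i) = 0) (s : Finset ι) :
    gibbsAverage (fun x : ι → X ↦ ∑ i, E i (x i)) (fun x ↦ (∑ i ∈ s, f i (x i)) ^ 2) =
      ∑ i ∈ s, gibbsAverage (E i) (fun a ↦ f i a ^ 2) := by
  classical
  have hpair := summable_pairFactor_mul_exp_neg hE hf hf2
  have hprod (i j : ι) := summable_pi_prod_mul_exp_neg_sum (hpair i j)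
  simp only [sum_sq_eq_sum_sum_prod_pairFactor]
  rw [gibbsAverage_sum s fun i _ ↦ by
    simpa only [Finset.sum_mul] using summable_sum fun j _ ↦ hprod i j]
  refine Finset.sum_congr rfl fun i hi ↦ ?_
  rw [gibbsAverage_sum s fun j _ ↦ hprod i j]
  simp only [gibbsAverage_pi_prod hE (hpair i _), prod_gibbsAverage_pairFactor hE hmean]
  rw [Finset.sum_ite_eq, if_pos hi]

end ProductGibbs

section IntGaussian

variable {d : ℝ}

lemma summable_int_pow_mul_exp_neg_mul_sq (hd : 0 < d) (k : ℕ) :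
    Summable fun n : ℤ ↦ (n : ℝ) ^ k * Real.exp (-(d * (n : ℝ) ^ 2)) := by
  have hle (n : ℕ) :
      (n : ℝ) ^ k * Real.exp (-(d * (n : ℝ) ^ 2)) ≤ (n : ℝ) ^ k * Real.exp (-d * n) := by
    have hn : (n : ℝ) ≤ (n : ℝ) ^ 2 := by exact_mod_cast Nat.le_self_pow two_ne_zero n
    have := mul_le_mul_of_nonneg_left hn hd.le
    gcongr
    linarith
  have hnat : Summable fun n : ℕ ↦ (n : ℝ) ^ k * Real.exp (-(d * (n : ℝ) ^ 2)) :=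
    .of_nonneg_of_le (fun _ ↦ by positivity) hle (Real.summable_pow_mul_exp_neg_nat_mul k hd)
  refine .of_nat_of_neg (by simpa using hnat) ((hnat.mul_left ((-1) ^ k)).congr fun n ↦ ?_)
  rw [Int.cast_neg, Int.cast_natCast, neg_pow (n : ℝ) k, neg_sq, mul_assoc]

/-- The variance of the discrete Gaussian on `ℤ` with weight `exp (-d * n ^ 2)`. -/
def intGaussianVariance (d : ℝ) : ℝ :=
  gibbsAverage (fun n : ℤ ↦ d * (n : ℝ) ^ 2) (fun n ↦ (n : ℝ) ^ 2)

lemma summable_int_exp_neg_mul_sq (hd : 0 < d) :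
    Summable fun n : ℤ ↦ Real.exp (-(d * (n : ℝ) ^ 2)) := by
  simpa using summable_int_pow_mul_exp_neg_mul_sq hd 0

lemma intGaussianVariance_pos (hd : 0 < d) : 0 < intGaussianVariance d :=
  div_pos
    ((summable_int_pow_mul_exp_neg_mul_sq hd 2).tsum_pos (fun _ ↦ by positivity) 1
      (by simp [Real.exp_pos]))
    (tsum_exp_neg_pos (summable_int_exp_neg_mul_sq hd))

end IntGaussian

section PiIntGaussian

variable {ι : Type*} [Fintype ι] {d : ι → ℝ}

lemma summable_pi_int_exp_neg_sum_mul_sq (hd : ∀ i, 0 < d i) :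
    Summable fun x : ι → ℤ ↦ Real.exp (-∑ i, d i * (x i : ℝ) ^ 2) :=
  summable_pi_exp_neg_sum (E := fun i (n : ℤ) ↦ d i * (n : ℝ) ^ 2)
    fun i ↦ summable_int_exp_neg_mul_sq (hd i)

lemma summable_pi_int_sum_sq_mul_exp_neg_sum_mul_sq (hd : ∀ i, 0 < d i) (s : Finset ι) :
    Summable fun x : ι → ℤ ↦
      (∑ i ∈ s, (x i : ℝ)) ^ 2 * Real.exp (-∑ i, d i * (x i : ℝ) ^ 2) :=
  summable_pi_sum_sq_mul_exp_neg_sum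
    (E := fun i (n : ℤ) ↦ d i * (n : ℝ) ^ 2) (f := fun _ n ↦ (n : ℝ))
    (fun i ↦ summable_int_exp_neg_mul_sq (hd i))
    (fun i ↦ by simpa using summable_int_pow_mul_exp_neg_mul_sq (hd i) 1)
    (fun i ↦ summable_int_pow_mul_exp_neg_mul_sq (hd i) 2) s

lemma gibbsAverage_pi_int_sum_sq (hd : ∀ i, 0 < d i) (s : Finset ι) :
    gibbsAverage (fun x : ι → ℤ ↦ ∑ i, d i * (x i : ℝ) ^ 2) (fun x ↦ (∑ i ∈ s, (x i : ℝ)) ^ 2) =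
      ∑ i ∈ s, intGaussianVariance (d i) :=
  gibbsAverage_pi_sum_sq (E := fun i (n : ℤ) ↦ d i * (n : ℝ) ^ 2) (f := fun _ n ↦ (n : ℝ))
    (fun i ↦ summable_int_exp_neg_mul_sq (hd i))
    (fun i ↦ by simpa using summable_int_pow_mul_exp_neg_mul_sq (hd i) 1)
    (fun i ↦ summable_int_pow_mul_exp_neg_mul_sq (hd i) 2)
    (fun i ↦ gibbsAverage_eq_zero_of_odd (by simp) (by simp)) s

end PiIntGaussian

section SumSqForm

variable {P V : Type*} [AddCommGroup V] [Module ℝ V] {c : P → ℝ} {ℓ : P → V →ₗ[ℝ] ℝ}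

lemma summable_mul_mul_of_summable_mul_sq (h : ∀ x, Summable fun p ↦ c p * ℓ p x ^ 2) (x y : V) :
    Summable fun p ↦ c p * (ℓ p x * ℓ p y) := by
  refine (((h (x + y)).sub (h (x - y))).div_const 4).congr fun p ↦ ?_
  rw [map_add, map_sub]
  ring

/-- The symmetric bilinear form polarising the weighted sum of squares `∑ c p * ℓ p x ^ 2`. -/
def sumSqForm (c : P → ℝ) (ℓ : P → V →ₗ[ℝ] ℝ) (h : ∀ x, Summable fun p ↦ c p * ℓ p x ^ 2) :
    LinearMap.BilinForm ℝ V :=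
  LinearMap.mk₂ ℝ (fun x y ↦ ∑' p, c p * (ℓ p x * ℓ p y))
    (fun x x' y ↦ by
      simp only [map_add, add_mul, mul_add]
      exact (summable_mul_mul_of_summable_mul_sq h x y).tsum_add
        (summable_mul_mul_of_summable_mul_sq h x' y))
    (fun a x y ↦ by
      simp only [map_smul, smul_eq_mul, ← tsum_mul_left]
      exact tsum_congr fun p ↦ by ring)
    (fun x y y' ↦ by
      simp only [map_add, mul_add]
      exact (summable_mul_mul_of_summable_mul_sq h x y).tsum_add
        (summable_mul_mul_of_summable_mul_sq h x y'))
    (fun a x y ↦ by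
      simp only [map_smul, smul_eq_mul, ← tsum_mul_left]
      exact tsum_congr fun p ↦ by ring)

lemma sumSqForm_apply_self (h : ∀ x, Summable fun p ↦ c p * ℓ p x ^ 2) (x : V) :
    sumSqForm c ℓ h x x = ∑' p, c p * ℓ p x ^ 2 := by
  simp only [sumSqForm, LinearMap.mk₂_apply, sq]

lemma sumSqForm_isSymm (h : ∀ x, Summable fun p ↦ c p * ℓ p x ^ 2) :
    (sumSqForm c ℓ h).IsSymm :=
  ⟨fun x y ↦ tsum_congr fun p ↦ by simp only [mul_comm]⟩

theorem gibbsAverage_sq_anti_of_sumSq_le {P' L : Type*} [AddCommGroup L] [IsAddTorsionFree L]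
    {c' : P' → ℝ} {ℓ' : P' → V →ₗ[ℝ] ℝ} (ι : L →+ V) (u : L →+ ℝ)
    (h : ∀ x, Summable fun p ↦ c p * ℓ p x ^ 2) (h' : ∀ x, Summable fun p ↦ c' p * ℓ' p x ^ 2)
    (hle : ∀ x, ∑' p, c p * ℓ p x ^ 2 ≤ ∑' p, c' p * ℓ' p x ^ 2)
    (hZ : Summable fun x ↦ Real.exp (-∑' p, c p * ℓ p (ι x) ^ 2))
    (hu : Summable fun x ↦ u x ^ 2 * Real.exp (-∑' p, c p * ℓ p (ι x) ^ 2)) :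
    gibbsAverage (fun x ↦ ∑' p, c' p * ℓ' p (ι x) ^ 2) (fun x ↦ u x ^ 2) ≤
      gibbsAverage (fun x ↦ ∑' p, c p * ℓ p (ι x) ^ 2) (fun x ↦ u x ^ 2) := by
  simp only [← sumSqForm_apply_self h, ← sumSqForm_apply_self h'] at hle hZ hu ⊢
  refine gibbsAverage_sq_anti ι u (sumSqForm_isSymm h) ⟨?_, ⟨fun x ↦ ?_⟩⟩ hZ hu
  · exact (sumSqForm_isSymm h').sub (sumSqForm_isSymm h)
  · exact sub_nonneg.2 (hle x)

end SumSqForm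

section InteractionEnergy

/-- The energy of the height function `x` under the translation-invariant pair interaction
`J (i - j) * (x i - x j) ^ 2`, summed over ordered pairs. -/
def interactionEnergy (J : ℤ → ℝ) (x : ℤ → ℝ) : ℝ :=
  ∑' p : ℤ × ℤ, J (p.1 - p.2) * (x p.1 - x p.2) ^ 2

/-- The nearest-neighbour Dirichlet energy, each bond counted once. -/
def dirichletEnergy (x : ℤ → ℝ) : ℝ :=
  ∑' i, (x (i + 1) - x i) ^ 2

variable {J x : ℤ → ℝ}

lemma sq_sub_le_mul_sum_sq_sub (x : ℤ → ℝ) (n : ℕ) (i : ℤ) :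
    (x (i + n) - x i) ^ 2 ≤ n * ∑ m ∈ Finset.range n, (x (i + m + 1) - x (i + m)) ^ 2 := by
  have telescope := Finset.sum_range_sub (fun m : ℕ ↦ x (i + m)) n
  simp only [Nat.cast_add, Nat.cast_one, Nat.cast_zero, add_zero, ← add_assoc] at telescope
  rw [← telescope]
  simpa only [Finset.card_range] using
    sq_sum_le_card_mul_sum_sq (s := Finset.range n) (f := fun m ↦ x (i + m + 1) - x (i + m))

lemma hasSum_mul_sum_sq_sub (hx : Summable fun i ↦ (x (i + 1) - x i) ^ 2) (n : ℕ) :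
    HasSum (fun i : ℤ ↦ (n : ℝ) * ∑ m ∈ Finset.range n, (x (i + m + 1) - x (i + m)) ^ 2)
      (n ^ 2 * dirichletEnergy x) := by
  have shifted (m : ℕ) :
      HasSum (fun i : ℤ ↦ (x (i + m + 1) - x (i + m)) ^ 2) (dirichletEnergy x) :=
    (Equiv.addRight (m : ℤ)).hasSum_iff.2 hx.hasSum
  simpa only [Finset.sum_const, Finset.card_range, nsmul_eq_mul, ← mul_assoc, ← sq] using
    (hasSum_sum fun m (_ : m ∈ Finset.range n) ↦ shifted m).mul_left (n : ℝ)

lemma summable_sq_sub_natCast (hx : Summable fun i ↦ (x (i + 1) - x i) ^ 2) (n : ℕ) :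
    Summable fun i : ℤ ↦ (x (i + n) - x i) ^ 2 :=
  (hasSum_mul_sum_sq_sub hx n).summable.of_nonneg_of_le (fun _ ↦ sq_nonneg _)
    (sq_sub_le_mul_sum_sq_sub x n)

lemma tsum_sq_sub_natCast_le (hx : Summable fun i ↦ (x (i + 1) - x i) ^ 2) (n : ℕ) :
    ∑' i : ℤ, (x (i + n) - x i) ^ 2 ≤ n ^ 2 * dirichletEnergy x :=
  hasSum_le (sq_sub_le_mul_sum_sq_sub x n) (summable_sq_sub_natCast hx n).hasSum
    (hasSum_mul_sum_sq_sub hx n)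

lemma sq_sub_neg_eq (x : ℤ → ℝ) (n i : ℤ) :
    (x (i + -n) - x i) ^ 2 = (fun j ↦ (x (j + n) - x j) ^ 2) (Equiv.addRight (-n) i) := by
  simp only [Equiv.coe_addRight, neg_add_cancel_right]
  ring

lemma summable_sq_sub_intCast (hx : Summable fun i ↦ (x (i + 1) - x i) ^ 2) (n : ℤ) :
    Summable fun i : ℤ ↦ (x (i + n) - x i) ^ 2 := by
  obtain ⟨m, rfl | rfl⟩ := n.eq_nat_or_neg
  · exact summable_sq_sub_natCast hx m
  · simp only [sq_sub_neg_eq x m]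
    exact (Equiv.addRight (-(m : ℤ))).summable_iff.2 (summable_sq_sub_natCast hx m)

lemma tsum_sq_sub_intCast_le (hx : Summable fun i ↦ (x (i + 1) - x i) ^ 2) (n : ℤ) :
    ∑' i : ℤ, (x (i + n) - x i) ^ 2 ≤ n ^ 2 * dirichletEnergy x := by
  obtain ⟨m, rfl | rfl⟩ := n.eq_nat_or_neg
  · exact tsum_sq_sub_natCast_le hx m
  · simp only [sq_sub_neg_eq x m]
    rw [(Equiv.addRight (-(m : ℤ))).tsum_eq fun j ↦ (x (j + m) - x j) ^ 2]
    simpa using tsum_sq_sub_natCast_le hx m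

/-- The reindexing of pairs `(n, i) ↦ (i + n, i)` by their difference. -/
def pairOfDiff : ℤ × ℤ ≃ ℤ × ℤ where
  toFun p := (p.2 + p.1, p.2)
  invFun p := (p.1 - p.2, p.2)
  left_inv p := by simp
  right_inv p := by simp

lemma interaction_pairOfDiff (J x : ℤ → ℝ) (p : ℤ × ℤ) :
    J ((pairOfDiff p).1 - (pairOfDiff p).2) * (x (pairOfDiff p).1 - x (pairOfDiff p).2) ^ 2 =
      J p.1 * (x (p.2 + p.1) - x p.2) ^ 2 := by
  simp [pairOfDiff]

lemma mul_tsum_sq_sub_le (hJ : ∀ n, 0 ≤ J n) (hx : Summable fun i ↦ (x (i + 1) - x i) ^ 2)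
    (n : ℤ) :
    ∑' i, J n * (x (i + n) - x i) ^ 2 ≤ n ^ 2 * J n * dirichletEnergy x := by
  rw [tsum_mul_left, mul_comm ((n : ℝ) ^ 2), mul_assoc]
  exact mul_le_mul_of_nonneg_left (tsum_sq_sub_intCast_le hx n) (hJ n)

lemma summable_mul_tsum_sq_sub (hJ : ∀ n, 0 ≤ J n) (hJ2 : Summable fun n : ℤ ↦ (n : ℝ) ^ 2 * J n)
    (hx : Summable fun i ↦ (x (i + 1) - x i) ^ 2) :
    Summable fun n : ℤ ↦ ∑' i, J n * (x (i + n) - x i) ^ 2 :=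
  (hJ2.mul_right (dirichletEnergy x)).of_nonneg_of_le
    (fun n ↦ tsum_nonneg fun _ ↦ mul_nonneg (hJ n) (sq_nonneg _)) (mul_tsum_sq_sub_le hJ hx)

lemma summable_interaction_diff (hJ : ∀ n, 0 ≤ J n)
    (hJ2 : Summable fun n : ℤ ↦ (n : ℝ) ^ 2 * J n)
    (hx : Summable fun i ↦ (x (i + 1) - x i) ^ 2) :
    Summable fun p : ℤ × ℤ ↦ J p.1 * (x (p.2 + p.1) - x p.2) ^ 2 :=
  (summable_prod_of_nonneg fun p ↦ mul_nonneg (hJ p.1) (sq_nonneg _)).2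
    ⟨fun n ↦ (summable_sq_sub_intCast hx n).mul_left (J n), summable_mul_tsum_sq_sub hJ hJ2 hx⟩

lemma summable_interaction (hJ : ∀ n, 0 ≤ J n) (hJ2 : Summable fun n : ℤ ↦ (n : ℝ) ^ 2 * J n)
    (hx : Summable fun i ↦ (x (i + 1) - x i) ^ 2) :
    Summable fun p : ℤ × ℤ ↦ J (p.1 - p.2) * (x p.1 - x p.2) ^ 2 :=
  pairOfDiff.summable_iff.1 <|
    (summable_interaction_diff hJ hJ2 hx).congr fun p ↦ (interaction_pairOfDiff J x p).symm

theorem interactionEnergy_le_mul_dirichletEnergy (hJ : ∀ n, 0 ≤ J n)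
    (hJ2 : Summable fun n : ℤ ↦ (n : ℝ) ^ 2 * J n)
    (hx : Summable fun i ↦ (x (i + 1) - x i) ^ 2) :
    interactionEnergy J x ≤ (∑' n : ℤ, (n : ℝ) ^ 2 * J n) * dirichletEnergy x := by
  calc interactionEnergy J x = ∑' p : ℤ × ℤ, J p.1 * (x (p.2 + p.1) - x p.2) ^ 2 := by
        rw [interactionEnergy, ← pairOfDiff.tsum_eq]
        simp only [interaction_pairOfDiff]
    _ = ∑' n, ∑' i, J n * (x (i + n) - x i) ^ 2 := (summable_interaction_diff hJ hJ2 hx).tsum_prod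
    _ ≤ ∑' n : ℤ, (n : ℝ) ^ 2 * J n * dirichletEnergy x :=
      (summable_mul_tsum_sq_sub hJ hJ2 hx).tsum_le_tsum (mul_tsum_sq_sub_le hJ hx)
        (hJ2.mul_right _)
    _ = (∑' n : ℤ, (n : ℝ) ^ 2 * J n) * dirichletEnergy x := tsum_mul_right

end InteractionEnergy

section Tree

/-- The parent of the site `k` in a spanning tree of `ℤ`: the non-positive half-line is a path
oriented towards `-∞`, and every `k > 0` is a leaf attached at `-k`. -/
def treeParent (k : ℤ) : ℤ := if k ≤ 0 then k - 1 else -k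

lemma treeParent_of_nonpos {k : ℤ} (hk : k ≤ 0) : treeParent k = k - 1 := if_pos hk

lemma treeParent_of_pos {k : ℤ} (hk : 0 < k) : treeParent k = -k := if_neg hk.not_ge

/-- The increment of `f` along the edge joining `k` to its parent. -/
def treeIncrement {R : Type*} [Sub R] (f : ℤ → R) (k : ℤ) : R := f k - f (treeParent k)

/-- The energy of a height function restricted to the edges of the tree, with conductances `d`. -/
def treeEnergy (d : ℤ → ℝ) (x : ℤ → ℝ) : ℝ := ∑' k, d k * treeIncrement x k ^ 2

variable {J x : ℤ → ℝ}

lemma treeEnergy_le_interactionEnergy (hJ : ∀ n, 0 ≤ J n)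
    (hx : Summable fun p : ℤ × ℤ ↦ J (p.1 - p.2) * (x p.1 - x p.2) ^ 2) :
    treeEnergy (fun k ↦ J (k - treeParent k)) x ≤ interactionEnergy J x :=
  tsum_comp_le_tsum_of_inj hx (fun _ ↦ mul_nonneg (hJ _) (sq_nonneg _))
    (i := fun k ↦ (k, treeParent k)) fun _ _ h ↦ congrArg Prod.fst h

lemma sq_grad_le_treeIncrement (x : ℤ → ℝ) (i : ℤ) :
    (x (i + 1) - x i) ^ 2 ≤ 3 * (treeIncrement x (i + 1) ^ 2 + treeIncrement x (-i) ^ 2 +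
      treeIncrement x i ^ 2) := by
  rcases lt_trichotomy i 0 with hi | rfl | hi
  · have hgrad : x (i + 1) - x i = treeIncrement x (i + 1) := by
      rw [treeIncrement, treeParent_of_nonpos (by lia), add_sub_cancel_right]
    rw [hgrad]
    nlinarith [sq_nonneg (treeIncrement x (i + 1)), sq_nonneg (treeIncrement x (-i)),
      sq_nonneg (treeIncrement x i)]
  · have hgrad : x (0 + 1) - x 0 = treeIncrement x (0 + 1) - treeIncrement x 0 := by
      simp [treeIncrement, treeParent]
    rw [hgrad, neg_zero]
    nlinarith [sq_nonneg (treeIncrement x (0 + 1) + treeIncrement x 0),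
      sq_nonneg (treeIncrement x (0 + 1)), sq_nonneg (treeIncrement x 0)]
  · have hgrad : x (i + 1) - x i =
        treeIncrement x (i + 1) - treeIncrement x (-i) - treeIncrement x i := by
      simp only [treeIncrement, treeParent_of_nonpos (neg_nonpos.2 hi.le), treeParent_of_pos hi,
        treeParent_of_pos (show 0 < i + 1 by lia), neg_add, sub_eq_add_neg]
      ring
    rw [hgrad]
    nlinarith [sq_nonneg (treeIncrement x (i + 1) + treeIncrement x (-i)),
      sq_nonneg (treeIncrement x (i + 1) + treeIncrement x i),
      sq_nonneg (treeIncrement x (-i) - treeIncrement x i)]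

lemma dirichletEnergy_le_tsum_treeIncrement (hx : Summable fun k ↦ treeIncrement x k ^ 2) :
    dirichletEnergy x ≤ 9 * ∑' k, treeIncrement x k ^ 2 := by
  have hsucc : HasSum (fun i ↦ treeIncrement x (i + 1) ^ 2) (∑' k, treeIncrement x k ^ 2) :=
    (Equiv.addRight (1 : ℤ)).hasSum_iff (f := fun k ↦ treeIncrement x k ^ 2) |>.2 hx.hasSum
  have hneg : HasSum (fun i ↦ treeIncrement x (-i) ^ 2) (∑' k, treeIncrement x k ^ 2) :=
    (Equiv.neg ℤ).hasSum_iff (f := fun k ↦ treeIncrement x k ^ 2) |>.2 hx.hasSum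
  have hbound := ((hsucc.add hneg).add hx.hasSum).mul_left 3
  have hgrad := hbound.summable.of_nonneg_of_le (fun _ ↦ sq_nonneg _) (sq_grad_le_treeIncrement x)
  calc dirichletEnergy x ≤ _ := hasSum_le (sq_grad_le_treeIncrement x) hgrad.hasSum hbound
    _ = 9 * ∑' k, treeIncrement x k ^ 2 := by ring

lemma interactionEnergy_le_treeEnergy (hJ : ∀ n, 0 ≤ J n)
    (hJ2 : Summable fun n : ℤ ↦ (n : ℝ) ^ 2 * J n)
    (hgrad : Summable fun i ↦ (x (i + 1) - x i) ^ 2)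
    (htree : Summable fun k ↦ treeIncrement x k ^ 2) :
    interactionEnergy J x ≤ treeEnergy (fun _ ↦ 9 * ∑' n : ℤ, (n : ℝ) ^ 2 * J n) x := by
  have hK : 0 ≤ ∑' n : ℤ, (n : ℝ) ^ 2 * J n := tsum_nonneg fun n ↦ mul_nonneg (sq_nonneg _) (hJ n)
  calc interactionEnergy J x ≤ (∑' n : ℤ, (n : ℝ) ^ 2 * J n) * dirichletEnergy x :=
        interactionEnergy_le_mul_dirichletEnergy hJ hJ2 hgrad
    _ ≤ (∑' n : ℤ, (n : ℝ) ^ 2 * J n) * (9 * ∑' k, treeIncrement x k ^ 2) :=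
      mul_le_mul_of_nonneg_left (dirichletEnergy_le_tsum_treeIncrement htree) hK
    _ = treeEnergy (fun _ ↦ 9 * ∑' n : ℤ, (n : ℝ) ^ 2 * J n) x := by
      rw [treeEnergy, tsum_mul_left]
      ring

end Tree

section TreeCoordinates

variable {R : Type*} [AddCommGroup R]

lemma sum_Icc_eq_sum_Icc_sub_one_add {m k : ℤ} (hk : m ≤ k) (g : ℤ → R) :
    ∑ j ∈ Finset.Icc m k, g j = ∑ j ∈ Finset.Icc m (k - 1), g j + g k := by
  rw [← Finset.insert_Icc_sub_one_right_eq_Icc hk, Finset.sum_insert (by simp), add_comm]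

lemma sum_Icc_sub_sub_one {m z : ℤ} (hz : m - 1 ≤ z) (f : ℤ → R) :
    ∑ k ∈ Finset.Icc m z, (f k - f (k - 1)) = f z - f (m - 1) := by
  induction z, hz using Int.leInduction with
  | base => simp
  | succ z hz ih =>
    rw [sum_Icc_eq_sum_Icc_sub_one_add (by lia), add_sub_cancel_right, ih]
    abel

/-- The function with tree increments `g` that vanishes on the path below `-N`. -/
def ofTreeIncrement (N : ℕ) (g : ℤ → R) (z : ℤ) : R :=
  ∑ k ∈ Finset.Icc (-N : ℤ) (-|z|), g k + if 0 < z then g z else 0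

lemma treeIncrement_ofTreeIncrement {N : ℕ} (g : ℤ → R) {k : ℤ} (hk : -(N : ℤ) ≤ k) :
    treeIncrement (ofTreeIncrement N g) k = g k := by
  rcases le_or_gt k 0 with hk0 | hk0
  · have hk1 : k - 1 ≤ 0 := by lia
    rw [treeIncrement, treeParent_of_nonpos hk0]
    simp only [ofTreeIncrement, abs_of_nonpos hk0, abs_of_nonpos hk1, neg_neg, if_neg hk0.not_gt,
      if_neg hk1.not_gt, add_zero]
    rw [sum_Icc_eq_sum_Icc_sub_one_add hk, add_sub_cancel_left]
  · rw [treeIncrement, treeParent_of_pos hk0]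
    simp only [ofTreeIncrement, abs_neg, if_pos hk0, neg_pos, if_neg hk0.not_gt, add_zero,
      add_sub_cancel_left]

variable {N : ℕ} {f : ℤ → R}

lemma ofTreeIncrement_eq_zero {g : ℤ → R} (hg : ∀ k, (N : ℤ) < |k| → g k = 0) {z : ℤ}
    (hz : (N : ℤ) < |z|) : ofTreeIncrement N g z = 0 := by
  rw [ofTreeIncrement, Finset.Icc_eq_empty (by lia), Finset.sum_empty, hg z hz, ite_self, add_zero]

lemma treeIncrement_eq_zero (hf : ∀ k, (N : ℤ) < |k| → f k = 0) {k : ℤ} (hk : (N : ℤ) < |k|) :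
    treeIncrement f k = 0 := by
  have hparent : (N : ℤ) < |treeParent k| := by
    rw [treeParent]
    split_ifs <;> grind
  rw [treeIncrement, hf k hk, hf _ hparent, sub_zero]

lemma sum_Icc_treeIncrement (hf : ∀ k, (N : ℤ) < |k| → f k = 0) {z : ℤ} (hz : z ≤ 0) :
    ∑ k ∈ Finset.Icc (-N : ℤ) z, treeIncrement f k = f z := by
  rcases lt_or_ge z (-N) with hzN | hzN
  · rw [Finset.Icc_eq_empty hzN.not_ge, Finset.sum_empty, hf z (by grind)]
  · have hpath : ∀ k ∈ Finset.Icc (-N : ℤ) z, treeIncrement f k = f k - f (k - 1) := fun k hk ↦ by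
      rw [treeIncrement, treeParent_of_nonpos ((Finset.mem_Icc.1 hk).2.trans hz)]
    rw [Finset.sum_congr rfl hpath, sum_Icc_sub_sub_one (by lia), hf (-N - 1) (by grind), sub_zero]

lemma ofTreeIncrement_treeIncrement (hf : ∀ k, (N : ℤ) < |k| → f k = 0) :
    ofTreeIncrement N (treeIncrement f) = f := by
  funext z
  rw [ofTreeIncrement, sum_Icc_treeIncrement hf (neg_nonpos.2 (abs_nonneg z))]
  split_ifs with hz
  · rw [abs_of_pos hz, treeIncrement, treeParent_of_pos hz, add_sub_cancel]
  · rw [abs_of_nonpos (not_lt.1 hz), neg_neg, add_zero]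

end TreeCoordinates

section Box

/-- The `R`-valued functions on `ℤ` vanishing outside `{-N, …, N}`. -/
def boxSubmodule (R : Type*) [CommRing R] (N : ℕ) : Submodule R (ℤ → R) where
  carrier := {f | ∀ k : ℤ, (N : ℤ) < |k| → f k = 0}
  add_mem' hf hg k hk := by simp [hf k hk, hg k hk]
  zero_mem' _ _ := rfl
  smul_mem' c f hf k hk := by simp [hf k hk]

variable (N : ℕ)

/-- Integer heights regarded as real heights. -/
def boxCast : boxSubmodule ℤ N →+ boxSubmodule ℝ N where
  toFun φ := ⟨fun k ↦ (φ.1 k : ℝ), fun k hk ↦ by simp [φ.2 k hk]⟩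
  map_zero' := Subtype.ext <| funext fun _ ↦ Int.cast_zero
  map_add' _ _ := Subtype.ext <| funext fun _ ↦ Int.cast_add _ _

/-- The height at the origin. -/
def originHeight : boxSubmodule ℤ N →+ ℝ where
  toFun φ := (φ.1 0 : ℝ)
  map_zero' := Int.cast_zero
  map_add' _ _ := Int.cast_add _ _

/-- The height difference between two sites as a linear functional. -/
def heightDiff (i j : ℤ) : boxSubmodule ℝ N →ₗ[ℝ] ℝ :=
  ((LinearMap.proj i : (ℤ → ℝ) →ₗ[ℝ] ℝ) - LinearMap.proj j) ∘ₗ (boxSubmodule ℝ N).subtype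

variable {N}

lemma summable_grad_sq_boxSubmodule (x : boxSubmodule ℝ N) :
    Summable fun i ↦ (x.1 (i + 1) - x.1 i) ^ 2 := by
  refine summable_of_ne_finset_zero (s := Finset.Icc (-N - 1 : ℤ) N) fun i hi ↦ ?_
  rw [Finset.mem_Icc] at hi
  rw [x.2 i (by grind), x.2 (i + 1) (by grind), sub_zero, zero_pow two_ne_zero]

lemma treeIncrement_eq_zero_of_notMem_Icc {R : Type*} [CommRing R] (f : boxSubmodule R N) {k : ℤ}
    (hk : k ∉ Finset.Icc (-N : ℤ) N) : treeIncrement f.1 k = 0 :=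
  treeIncrement_eq_zero f.2 (not_le.1 fun h ↦ hk (Finset.mem_Icc.2 (abs_le.1 h)))

lemma summable_treeIncrement_sq_boxSubmodule (d : ℤ → ℝ) (x : boxSubmodule ℝ N) :
    Summable fun k ↦ d k * treeIncrement x.1 k ^ 2 :=
  summable_of_ne_finset_zero fun k hk ↦ by
    rw [treeIncrement_eq_zero_of_notMem_Icc x hk, zero_pow two_ne_zero, mul_zero]

variable (N) in
/-- A height function on the box is determined by arbitrary increments on the tree edges whose
child endpoint lies in the box. -/
def treeCoordinates : boxSubmodule ℤ N ≃ (Finset.Icc (-N : ℤ) N → ℤ) where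
  toFun φ k := treeIncrement φ.1 k
  invFun y := ⟨ofTreeIncrement N fun k ↦ if hk : k ∈ Finset.Icc (-N : ℤ) N then y ⟨k, hk⟩ else 0,
    fun _ ↦ ofTreeIncrement_eq_zero fun k hk ↦ dif_neg fun hk' ↦ by
      rw [Finset.mem_Icc, ← abs_le] at hk'
      exact hk.not_ge hk'⟩
  left_inv φ := by
    have hextend : (fun k ↦ if k ∈ Finset.Icc (-N : ℤ) N then treeIncrement φ.1 k else 0) =
        treeIncrement φ.1 :=
      funext fun k ↦ ite_eq_left_iff.2 fun hk ↦ (treeIncrement_eq_zero_of_notMem_Icc φ hk).symm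
    exact Subtype.ext ((congrArg _ hextend).trans (ofTreeIncrement_treeIncrement φ.2))
  right_inv y := funext fun k ↦
    (treeIncrement_ofTreeIncrement _ (Finset.mem_Icc.1 k.2).1).trans (dif_pos k.2)

end Box

section TreeGaussian

variable {N : ℕ} {d : ℤ → ℝ}

variable (N) in
/-- The sites of the box lying on the path from `-∞` to the origin, that is, the children of the
tree edges whose increments add up to the height at the origin. -/
def pathSites : Finset (Finset.Icc (-N : ℤ) N) :=
  (Finset.Icc (-N : ℤ) 0).subtype (· ∈ Finset.Icc (-N : ℤ) N)

lemma sum_pathSites {R : Type*} [AddCommMonoid R] (g : ℤ → R) :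
    ∑ k ∈ pathSites N, g k = ∑ k ∈ Finset.Icc (-N : ℤ) 0, g k :=
  Finset.sum_subtype_of_mem g fun _ hk ↦ Finset.Icc_subset_Icc_right (Nat.cast_nonneg N) hk

lemma treeIncrement_boxCast (φ : boxSubmodule ℤ N) (k : ℤ) :
    treeIncrement (boxCast N φ).1 k = (treeIncrement φ.1 k : ℤ) :=
  (Int.cast_sub _ _).symm

lemma treeEnergy_boxCast (d : ℤ → ℝ) (φ : boxSubmodule ℤ N) :
    treeEnergy d (boxCast N φ).1 =
      ∑ k : Finset.Icc (-N : ℤ) N, d k * (treeCoordinates N φ k : ℝ) ^ 2 := by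
  have hvanish : ∀ k ∉ Finset.Icc (-N : ℤ) N, d k * treeIncrement (boxCast N φ).1 k ^ 2 = 0 :=
    fun k hk ↦ by
      rw [treeIncrement_eq_zero_of_notMem_Icc _ hk, zero_pow two_ne_zero, mul_zero]
  rw [treeEnergy, tsum_eq_sum hvanish, ← Finset.sum_coe_sort]
  simp only [treeIncrement_boxCast]
  rfl

lemma originHeight_eq_sum (φ : boxSubmodule ℤ N) :
    originHeight N φ = ∑ k ∈ pathSites N, (treeCoordinates N φ k : ℝ) := by
  calc originHeight N φ = ∑ k ∈ Finset.Icc (-N : ℤ) 0, treeIncrement (boxCast N φ).1 k :=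
        (sum_Icc_treeIncrement (boxCast N φ).2 le_rfl).symm
    _ = ∑ k ∈ pathSites N, treeIncrement (boxCast N φ).1 k := (sum_pathSites _).symm
    _ = ∑ k ∈ pathSites N, (treeCoordinates N φ k : ℝ) :=
      Finset.sum_congr rfl fun k _ ↦ treeIncrement_boxCast φ k

variable (N) in
lemma summable_exp_neg_treeEnergy (hd : ∀ k, 0 < d k) :
    Summable fun φ ↦ Real.exp (-treeEnergy d (boxCast N φ).1) := by
  simp only [treeEnergy_boxCast]
  exact (treeCoordinates N).summable_iff.2
    (summable_pi_int_exp_neg_sum_mul_sq fun k : Finset.Icc (-N : ℤ) N ↦ hd k)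

variable (N) in
lemma summable_originHeight_sq_mul_exp_neg_treeEnergy (hd : ∀ k, 0 < d k) :
    Summable fun φ ↦ originHeight N φ ^ 2 * Real.exp (-treeEnergy d (boxCast N φ).1) := by
  simp only [treeEnergy_boxCast, originHeight_eq_sum]
  exact (treeCoordinates N).summable_iff.2
    (summable_pi_int_sum_sq_mul_exp_neg_sum_mul_sq
      (fun k : Finset.Icc (-N : ℤ) N ↦ hd k) (pathSites N))

variable (N) in
theorem gibbsAverage_treeEnergy_originHeight_sq (hd : ∀ k, 0 < d k) {b : ℝ}
    (hb : ∀ k ≤ 0, d k = b) :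
    gibbsAverage (fun φ ↦ treeEnergy d (boxCast N φ).1) (fun φ ↦ originHeight N φ ^ 2) =
      (N + 1) * intGaussianVariance b := by
  simp only [treeEnergy_boxCast, originHeight_eq_sum]
  calc _ = ∑ k ∈ pathSites N, intGaussianVariance (d k) :=
        (gibbsAverage_comp_equiv (treeCoordinates N) _ _).trans
          (gibbsAverage_pi_int_sum_sq (fun k : Finset.Icc (-N : ℤ) N ↦ hd k) (pathSites N))
    _ = ∑ k ∈ Finset.Icc (-N : ℤ) 0, intGaussianVariance (d k) :=
      sum_pathSites fun k ↦ intGaussianVariance (d k)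
    _ = ∑ _k ∈ Finset.Icc (-N : ℤ) 0, intGaussianVariance b :=
      Finset.sum_congr rfl fun k hk ↦ by rw [hb k (Finset.mem_Icc.1 hk).2]
    _ = (N + 1) * intGaussianVariance b := by simp [add_comm]

end TreeGaussian

section Sandwich

variable {N : ℕ} {J : ℤ → ℝ}

instance : IsAddTorsionFree (boxSubmodule ℤ N) :=
  Subtype.val_injective.isAddTorsionFree (boxSubmodule ℤ N).subtype.toAddMonoidHom

lemma treeConductance_of_nonpos (J : ℤ → ℝ) {k : ℤ} (hk : k ≤ 0) : J (k - treeParent k) = J 1 := by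
  rw [treeParent_of_nonpos hk, sub_sub_cancel]

lemma treeConductance_pos (hpos : ∀ n, 0 < n → 0 < J n) (k : ℤ) : 0 < J (k - treeParent k) :=
  hpos _ (by rw [treeParent]; split_ifs <;> lia)

lemma tsum_sq_mul_pos (hJ : ∀ n, 0 ≤ J n) (hJ1 : 0 < J 1)
    (hJ2 : Summable fun n : ℤ ↦ (n : ℝ) ^ 2 * J n) : 0 < ∑' n : ℤ, (n : ℝ) ^ 2 * J n :=
  hJ2.tsum_pos (fun n ↦ mul_nonneg (sq_nonneg _) (hJ n)) 1 (by simpa using hJ1)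

variable (N) in
theorem gibbsAverage_interactionEnergy_le (hJ : ∀ n, 0 ≤ J n) (hpos : ∀ n, 0 < n → 0 < J n)
    (hJ2 : Summable fun n : ℤ ↦ (n : ℝ) ^ 2 * J n) :
    gibbsAverage (fun φ ↦ interactionEnergy J (boxCast N φ).1) (fun φ ↦ originHeight N φ ^ 2) ≤
      (N + 1) * intGaussianVariance (J 1) := by
  have hd := treeConductance_pos hpos
  have hsum (x : boxSubmodule ℝ N) := summable_interaction hJ hJ2 (summable_grad_sq_boxSubmodule x)
  rw [← gibbsAverage_treeEnergy_originHeight_sq N hd fun _ ↦ treeConductance_of_nonpos J]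
  exact gibbsAverage_sq_anti_of_sumSq_le
    (c := fun k ↦ J (k - treeParent k)) (ℓ := fun k ↦ heightDiff N k (treeParent k))
    (c' := fun p : ℤ × ℤ ↦ J (p.1 - p.2)) (ℓ' := fun p ↦ heightDiff N p.1 p.2)
    (boxCast N) (originHeight N)
    (summable_treeIncrement_sq_boxSubmodule _) hsum
    (fun x ↦ treeEnergy_le_interactionEnergy hJ (hsum x))
    (summable_exp_neg_treeEnergy N hd) (summable_originHeight_sq_mul_exp_neg_treeEnergy N hd)

variable (N) in
theorem le_gibbsAverage_interactionEnergy (hJ : ∀ n, 0 ≤ J n) (hpos : ∀ n, 0 < n → 0 < J n)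
    (hJ2 : Summable fun n : ℤ ↦ (n : ℝ) ^ 2 * J n) :
    (N + 1) * intGaussianVariance (9 * ∑' n : ℤ, (n : ℝ) ^ 2 * J n) ≤
      gibbsAverage (fun φ ↦ interactionEnergy J (boxCast N φ).1)
        (fun φ ↦ originHeight N φ ^ 2) := by
  have hd := treeConductance_pos hpos
  have hsum (x : boxSubmodule ℝ N) := summable_interaction hJ hJ2 (summable_grad_sq_boxSubmodule x)
  have hlower (x : boxSubmodule ℝ N) := treeEnergy_le_interactionEnergy hJ (hsum x)
  have htree (x : boxSubmodule ℝ N) : Summable fun k ↦ treeIncrement x.1 k ^ 2 := by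
    simpa using summable_treeIncrement_sq_boxSubmodule (fun _ ↦ 1) x
  have hupper (x : boxSubmodule ℝ N) := interactionEnergy_le_treeEnergy hJ hJ2
    (summable_grad_sq_boxSubmodule x) (htree x)
  have hK : 0 < 9 * ∑' n : ℤ, (n : ℝ) ^ 2 * J n :=
    mul_pos (by norm_num) (tsum_sq_mul_pos hJ (hpos 1 one_pos) hJ2)
  rw [← gibbsAverage_treeEnergy_originHeight_sq N (fun _ ↦ hK) fun _ _ ↦ rfl]
  exact gibbsAverage_sq_anti_of_sumSq_le
    (c := fun p : ℤ × ℤ ↦ J (p.1 - p.2)) (ℓ := fun p ↦ heightDiff N p.1 p.2)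
    (c' := fun _ ↦ 9 * ∑' n : ℤ, (n : ℝ) ^ 2 * J n) (ℓ' := fun k ↦ heightDiff N k (treeParent k))
    (boxCast N) (originHeight N)
    hsum (summable_treeIncrement_sq_boxSubmodule _) hupper
    (summable_exp_neg_of_le (fun φ ↦ hlower (boxCast N φ)) (summable_exp_neg_treeEnergy N hd))
    (summable_mul_exp_neg_of_le (fun φ ↦ hlower (boxCast N φ)) (fun _ ↦ sq_nonneg _)
      (summable_originHeight_sq_mul_exp_neg_treeEnergy N hd))

end Sandwich

section Chain

/-- The coupling `β / |n| ^ α` of the chain; its value at `n = 0` is irrelevant, since it is only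
ever multiplied by a vanishing height difference. -/
def chainCoupling (β α : ℝ) (n : ℤ) : ℝ := β / |(n : ℝ)| ^ α

/-- The configurations of the chain, regarded as a lattice. -/
def boxEquivChainConfig (N : ℕ) : boxSubmodule ℤ N ≃ ChainConfig N where
  toFun φ := ⟨φ.1, φ.2⟩
  invFun φ := ⟨φ.1, φ.2⟩

variable {β α : ℝ}

lemma chainCoupling_nonneg (hβ : 0 ≤ β) (n : ℤ) : 0 ≤ chainCoupling β α n :=
  div_nonneg hβ (Real.rpow_nonneg (abs_nonneg _) _)

lemma chainCoupling_pos (hβ : 0 < β) (n : ℤ) (hn : 0 < n) : 0 < chainCoupling β α n :=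
  div_pos hβ (Real.rpow_pos_of_pos (abs_pos.2 (Int.cast_ne_zero.2 hn.ne')) _)

lemma chainCoupling_one (β α : ℝ) : chainCoupling β α 1 = β := by simp [chainCoupling]

lemma summable_sq_mul_chainCoupling (hβ : 0 ≤ β) (hα : 3 < α) :
    Summable fun n : ℤ ↦ (n : ℝ) ^ 2 * chainCoupling β α n := by
  refine .of_nonneg_of_le (fun n ↦ mul_nonneg (sq_nonneg _) (chainCoupling_nonneg hβ n))
    (fun n ↦ ?_) ((Real.summable_abs_int_rpow (b := α - 2) (by linarith)).mul_left β)
  rcases eq_or_ne n 0 with rfl | hn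
  · have := Real.rpow_nonneg (abs_nonneg ((0 : ℤ) : ℝ)) (-(α - 2))
    simpa using mul_nonneg hβ this
  · have habs : (0 : ℝ) < |(n : ℝ)| := abs_pos.2 (Int.cast_ne_zero.2 hn)
    rw [chainCoupling, neg_sub, Real.rpow_sub habs, Real.rpow_two, sq_abs]
    exact le_of_eq (by ring)

lemma chainEnergy_eq_interactionEnergy (β α : ℝ) (φ : ℤ → ℤ) :
    chainEnergy β α 2 φ = interactionEnergy (chainCoupling β α) fun k ↦ (φ k : ℝ) := by
  rw [chainEnergy, interactionEnergy, ← tsum_mul_left]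
  refine tsum_congr fun p ↦ ?_
  split_ifs with hp
  · simp [hp]
  · rw [chainCoupling, Real.rpow_two, sq_abs, Int.cast_sub (φ p.1)]
    ring

lemma chainWeight_boxEquivChainConfig (β α : ℝ) {N : ℕ} (φ : boxSubmodule ℤ N) :
    chainWeight β α 2 (boxEquivChainConfig N φ).val =
      Real.exp (-interactionEnergy (chainCoupling β α) (boxCast N φ).1) := by
  rw [chainWeight, chainEnergy_eq_interactionEnergy]
  rfl

lemma tsum_mul_chainWeight_div_chainZ (N : ℕ) (β α : ℝ) (f : ℤ → ℝ) :
    (∑' φ : ChainConfig N, f (φ.val 0) * chainWeight β α 2 φ.val) / chainZ N β α 2 =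
      gibbsAverage (fun φ ↦ interactionEnergy (chainCoupling β α) (boxCast N φ).1)
        (fun φ ↦ f (φ.1 0)) := by
  rw [chainZ, gibbsAverage, ← (boxEquivChainConfig N).tsum_eq, ← (boxEquivChainConfig N).tsum_eq]
  simp only [chainWeight_boxEquivChainConfig]
  rfl

lemma interactionEnergy_boxCast_neg (J : ℤ → ℝ) {N : ℕ} (φ : boxSubmodule ℤ N) :
    interactionEnergy J (boxCast N (-φ)).1 = interactionEnergy J (boxCast N φ).1 := by
  refine tsum_congr fun p ↦ ?_
  rw [map_neg, Submodule.coe_neg, Pi.neg_apply, Pi.neg_apply]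
  ring

lemma chainMean_eq_zero (N : ℕ) (β α : ℝ) : chainMean N β α 2 = 0 :=
  (tsum_mul_chainWeight_div_chainZ N β α fun n ↦ (n : ℝ)).trans <|
    gibbsAverage_eq_zero_of_odd (interactionEnergy_boxCast_neg _) (map_neg (originHeight N))

theorem chainVar_eq_gibbsAverage (N : ℕ) (β α : ℝ) :
    chainVar N β α 2 = gibbsAverage
      (fun φ ↦ interactionEnergy (chainCoupling β α) (boxCast N φ).1)
      (fun φ ↦ originHeight N φ ^ 2) := by
  rw [chainVar, chainMean_eq_zero, zero_pow two_ne_zero, sub_zero]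
  exact tsum_mul_chainWeight_div_chainZ N β α fun n ↦ (n : ℝ) ^ 2

end Chain

end

/-- **Linear delocalisation of the discrete Gaussian long-range chain for `α > 3`.**
For every `β ∈ (0,∞)` and every `α > 3` there exist constants `c_β > 0` and `C_β < ∞`
such that for every `N ≥ 1`, `c_β N ≤ Var_{N,β,α}[φ(0)] ≤ C_β N`. -/
theorem gaussian_chain_linear_deloc_alpha_gt_three
    (β : ℝ) (hβ : 0 < β) (α : ℝ) (hα : 3 < α) :
    ∃ c C : ℝ, 0 < c ∧
      ∀ N : ℕ, 1 ≤ N →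
        c * (N : ℝ) ≤ chainVar N β α 2 ∧ chainVar N β α 2 ≤ C * (N : ℝ) := by
  have hpos := chainCoupling_pos (α := α) hβ
  have hJ := chainCoupling_nonneg (α := α) hβ.le
  have hJ2 := summable_sq_mul_chainCoupling hβ.le hα
  set K := ∑' n : ℤ, (n : ℝ) ^ 2 * chainCoupling β α n
  have hK : 0 < K := tsum_sq_mul_pos hJ (hpos 1 one_pos) hJ2
  have hlower : 0 < intGaussianVariance (9 * K) := intGaussianVariance_pos (by positivity)
  have hupper : 0 < intGaussianVariance β := intGaussianVariance_pos hβ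
  refine ⟨intGaussianVariance (9 * K), 2 * intGaussianVariance β, hlower, fun N hN ↦ ?_⟩
  have hN' : (1 : ℝ) ≤ N := Nat.one_le_cast.2 hN
  rw [chainVar_eq_gibbsAverage]
  constructor
  · refine le_trans ?_ (le_gibbsAverage_interactionEnergy N hJ hpos hJ2)
    nlinarith
  · refine (gibbsAverage_interactionEnergy_le N hJ hpos hJ2).trans ?_
    rw [chainCoupling_one]
    nlinarith
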